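/- Let F(x) = 4x(1−x). Let p₀ ∈ L¹[0,1] be a probability density (p₀ ≥ 0, ∫₀¹ p₀ = 1) and let μ₀ be the measure with density p₀ (supported in [0,1]) with respect to Lebesgue measure. For each n, let p_n denote the Radon–Nikodym derivative of the pushforward measure (F^n)_*μ₀ with respect to Lebesgue measure. Then ∫₀¹ |p_n(x) − q(x)| dx → 0 as n → ∞, where q(x) = 1/(π·√(x(1−x))) for 0 < x < 1. -/

import Mathlib

open MeasureTheory Filter Topology

/-- The logistic map with parameter `r = 4`. -/
noncomputable def logisticMap (x : ℝ) : ℝ := 4 * x * (1 - x)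

/-- The invariant density of the logistic map with `r = 4`. -/
noncomputable def logisticDensity (x : ℝ) : ℝ :=
  if 0 < x ∧ x < 1 then 1 / (Real.pi * Real.sqrt (x * (1 - x))) else 0

/-!
The substitution `x = h θ = (1 - cos (π θ)) / 2` turns the logistic map `F` into the doubling of
angles and `q dx` into Lebesgue measure. Hence, for a density `p` on `[0, 1]` and a test function
`s`, the integral of `s (Fⁿ x) p x` becomes that of `s (h (2ⁿ θ)) g θ` for some `g ∈ L¹` depending
only on `p`.

If `φ` has period `T` and `N` is large, then `∫ φ (N x) g x dx` is close to the mean of `φ` times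
`∫ g`: translating `x` by `t / N` costs at most `‖φ‖_∞ ‖g (· + t / N) - g‖₁`, and averaging over
`t ∈ [0, T]` replaces `φ` by its mean. The error is uniform over `|φ| ≤ 1`, so the convergence is
uniform over test functions `|s| ≤ 1`; by duality this is convergence of the densities in `L¹`.
-/

open scoped ENNReal

section Measure

variable {α : Type*} [MeasurableSpace α] {μ ν : Measure α}

theorem integral_abs_le_of_forall_integral_mul_le {f : α → ℝ} (hf : Integrable f μ) {C : ℝ}
    (h : ∀ s : α → ℝ, Measurable s → (∀ x, |s x| ≤ 1) → ∫ x, s x * f x ∂μ ≤ C) :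
    ∫ x, |f x| ∂μ ≤ C := by
  set f' := hf.aestronglyMeasurable.mk f
  have hf' : Measurable f' := hf.aestronglyMeasurable.stronglyMeasurable_mk.measurable
  have hsign : Measurable fun x => if 0 ≤ f' x then (1 : ℝ) else -1 :=
    Measurable.ite (measurableSet_le measurable_const hf') measurable_const measurable_const
  refine le_of_eq_of_le (integral_congr_ae ?_) (h _ hsign fun x => ?_)
  · filter_upwards [hf.aestronglyMeasurable.ae_eq_mk] with x hx
    rw [hx]
    split_ifs with h0
    · rw [abs_of_nonneg h0, one_mul]
    · rw [abs_of_neg (not_le.1 h0), neg_one_mul]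
  · split_ifs <;> simp

theorem setLIntegral_rnDeriv_ne_top {s : Set α} (hs : μ s ≠ ∞) :
    ∫⁻ x in s, μ.rnDeriv ν x ∂ν ≠ ∞ :=
  ne_top_of_le_ne_top hs (Measure.setLIntegral_rnDeriv_le s)

theorem integrableOn_toReal_rnDeriv {s : Set α} (hs : μ s ≠ ∞) :
    IntegrableOn (fun x => (μ.rnDeriv ν x).toReal) s ν :=
  integrable_toReal_of_lintegral_ne_top (Measure.measurable_rnDeriv μ ν).aemeasurable
    (setLIntegral_rnDeriv_ne_top hs)

theorem setIntegral_toReal_rnDeriv_smul {E : Type*} [NormedAddCommGroup E] [NormedSpace ℝ E]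
    [μ.HaveLebesgueDecomposition ν] (hμν : μ ≪ ν) {s : Set α} (hs : MeasurableSet s)
    (hμs : μ s ≠ ∞) (f : α → E) :
    ∫ x in s, (μ.rnDeriv ν x).toReal • f x ∂ν = ∫ x in s, f x ∂μ := by
  rw [← setIntegral_withDensity_eq_setIntegral_toReal_smul (Measure.measurable_rnDeriv μ ν)
    (ae_lt_top (Measure.measurable_rnDeriv μ ν) (setLIntegral_rnDeriv_ne_top hμs)) f hs,
    Measure.withDensity_rnDeriv_eq μ ν hμν]

theorem withDensity_ofReal_apply_eq_ofReal_setIntegral {s : Set α} (hs : MeasurableSet s)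
    {f : α → ℝ} (hf : 0 ≤ᵐ[μ.restrict s] f) (hfs : IntegrableOn f s μ) :
    μ.withDensity (fun x => ENNReal.ofReal (f x)) s = ENNReal.ofReal (∫ x in s, f x ∂μ) := by
  rw [withDensity_apply _ hs, ofReal_integral_eq_lintegral_ofReal hfs hf]

end Measure

-- Near a.e. point `f` has a local inverse; it is differentiable, hence maps null sets to null sets.
theorem quasiMeasurePreserving_of_ae_hasStrictFDerivAt_equiv {E : Type*} [NormedAddCommGroup E]
    [NormedSpace ℝ E] [FiniteDimensional ℝ E] [MeasurableSpace E] [BorelSpace E]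
    {μ : Measure E} [μ.IsAddHaarMeasure] {f : E → E} (hf : Measurable f)
    (hf' : ∀ᵐ x ∂μ, ∃ f' : E ≃L[ℝ] E, HasStrictFDerivAt f (f' : E →L[ℝ] E) x) :
    Measure.QuasiMeasurePreserving f μ μ := by
  refine ⟨hf, Measure.AbsolutelyContinuous.mk fun S hS hS0 => ?_⟩
  rw [Measure.map_apply hf hS]
  set D := {x | ∃ f' : E ≃L[ℝ] E, HasStrictFDerivAt f (f' : E →L[ℝ] E) x}
  suffices hD : μ (f ⁻¹' S ∩ D) = 0 from
    (measure_congr (inter_ae_eq_left_of_ae_eq_univ (eventuallyEq_univ.2 hf'))).symm.trans hD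
  refine measure_null_of_locally_null _ fun x hx => ?_
  obtain ⟨f', hfx⟩ := hx.2
  let e := hfx.toOpenPartialHomeomorph f
  refine ⟨f ⁻¹' S ∩ D ∩ e.source, inter_mem_nhdsWithin _
    (e.open_source.mem_nhds hfx.mem_toOpenPartialHomeomorph_source), ?_⟩
  have hsub : f ⁻¹' S ∩ D ∩ e.source ⊆ e.symm '' (f '' (f ⁻¹' S ∩ D ∩ e.source)) := by
    intro y hy
    exact ⟨f y, ⟨y, hy, rfl⟩, e.left_inv hy.2⟩
  refine measure_mono_null hsub
    (addHaar_image_eq_zero_of_differentiableOn_of_addHaar_eq_zero μ ?_ ?_)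
  · rintro _ ⟨y, ⟨⟨-, g', hg'⟩, hy⟩, rfl⟩
    have hinv : e.symm (f y) = y := e.left_inv hy
    exact (e.hasFDerivAt_symm (f' := g') (e.map_source hy)
      (hinv.symm ▸ hg'.hasFDerivAt)).differentiableAt.differentiableWithinAt
  · exact measure_mono_null (by rintro _ ⟨y, hy, rfl⟩; exact hy.1.1) hS0

theorem tendsto_integral_norm_add_left_sub {G E : Type*} [AddGroup G] [TopologicalSpace G]
    [IsTopologicalAddGroup G] [MeasurableSpace G] [BorelSpace G] {μ : Measure G}
    [IsLocallyFiniteMeasure μ] [μ.InnerRegularCompactLTTop] [μ.IsAddLeftInvariant]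
    [NormedAddCommGroup E] {g : G → E} (hg : Integrable g μ) :
    Tendsto (fun t => ∫ x, ‖g (t + x) - g x‖ ∂μ) (𝓝 0) (𝓝 0) := by
  have hg1 : MemLp g 1 μ := memLp_one_iff_integrable.2 hg
  have : Fact ((1 : ℝ≥0∞) ≠ ∞) := ⟨ENNReal.one_ne_top⟩
  have hcont : Continuous fun t : G => DomAddAct.mk t +ᵥ hg1.toLp g :=
    continuous_vadd.comp (DomAddAct.continuous_mk.prodMk continuous_const)
  have hdist (t : G) : dist (DomAddAct.mk t +ᵥ hg1.toLp g) (hg1.toLp g) =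
      ∫ x, ‖g (t + x) - g x‖ ∂μ := by
    rw [DomAddAct.mk_vadd_toLp, dist_eq_norm, ← MemLp.toLp_sub, L1.norm_eq_integral_norm]
    exact integral_congr_ae ((MemLp.coeFn_toLp _).fun_comp norm)
  have := (hcont.tendsto 0).dist (tendsto_const_nhds (x := hg1.toLp g))
  simpa only [hdist, zero_add, sub_self, norm_zero, integral_zero] using this

theorem intervalIntegral_two_mul_of_periodic_of_even {φ : ℝ → ℝ} {a : ℝ}
    (hφ : φ.Periodic (2 * a)) (hev : φ.Even) (hint : ∀ b c, IntervalIntegrable φ volume b c) :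
    ∫ x in 0..2 * a, φ x = 2 * ∫ x in 0..a, φ x := by
  have hreflect : ∫ x in a..2 * a, φ x = ∫ x in 0..a, φ x := by
    have h := intervalIntegral.integral_comp_sub_left φ (2 * a) (a := 0) (b := a)
    simp only [sub_zero, hφ.sub_eq', hev _] at h
    rw [h]
    congr 1
    ring
  rw [← intervalIntegral.integral_add_adjacent_intervals (hint 0 a) (hint a _), hreflect, two_mul]

section Fejer

variable {E : Type*} [NormedAddCommGroup E] [NormedSpace ℝ E] {φ : ℝ → ℝ} {g : ℝ → E} {N T : ℝ}

theorem norm_integral_comp_mul_smul_sub_le (hφ : Measurable φ) (hφ1 : ∀ x, |φ x| ≤ 1)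
    (hg : Integrable g) (hN : N ≠ 0) (t : ℝ) :
    ‖(∫ x, φ (N * x) • g x) - ∫ x, φ (t + N * x) • g x‖ ≤ ∫ x, ‖g (t / N + x) - g x‖ := by
  have hφt : Measurable fun x => φ (t + N * x) := by fun_prop
  have hmod {ψ : ℝ → E} (hψ : Integrable ψ) : Integrable fun x => φ (t + N * x) • ψ x :=
    hψ.bdd_smul 1 hφt.aestronglyMeasurable (.of_forall fun _ => hφ1 _)
  have hgt : Integrable fun x => g (t / N + x) := hg.comp_add_left _
  have hshift : ∫ x, φ (N * x) • g x = ∫ x, φ (t + N * x) • g (t / N + x) := by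
    rw [← integral_add_left_eq_self _ (t / N)]
    simp only [mul_add, mul_div_cancel₀ t hN]
  rw [hshift, ← integral_sub (hmod hgt) (hmod hg)]
  refine norm_integral_le_of_norm_le (hgt.sub hg).norm (.of_forall fun x => ?_)
  rw [← smul_sub, norm_smul]
  exact mul_le_of_le_one_left (norm_nonneg _) (hφ1 _)

theorem integrable_prod_comp_add_mul_smul (hφ : Measurable φ) (hφ1 : ∀ x, |φ x| ≤ 1)
    (hg : Integrable g) (N T : ℝ) :
    Integrable (Function.uncurry fun t x => φ (t + N * x) • g x)
      ((volume.restrict (Set.uIoc 0 T)).prod volume) := by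
  have : IsFiniteMeasure (volume.restrict (Set.uIoc 0 T)) := ⟨by simp [Set.uIoc]⟩
  have hφN : Measurable fun z : ℝ × ℝ => φ (z.1 + N * z.2) := by fun_prop
  exact (hg.comp_snd _).bdd_smul 1 hφN.aestronglyMeasurable (.of_forall fun _ => hφ1 _)

theorem integral_integral_comp_add_mul_smul [CompleteSpace E] (hφ : Measurable φ)
    (hφ1 : ∀ x, |φ x| ≤ 1) (hφT : φ.Periodic T) (hg : Integrable g) (N : ℝ) :
    ∫ t in 0..T, ∫ x, φ (t + N * x) • g x = (∫ t in 0..T, φ t) • ∫ x, g x := by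
  rw [intervalIntegral_integral_swap (integrable_prod_comp_add_mul_smul hφ hφ1 hg N T),
    ← integral_smul]
  congr! 2 with x
  rw [intervalIntegral.integral_smul_const, intervalIntegral.integral_comp_add_right,
    zero_add, add_comm, hφT.intervalIntegral_add_eq (N * x) 0, zero_add]

theorem eventually_norm_integral_comp_mul_smul_sub_le [CompleteSpace E] (hg : Integrable g)
    (hT : 0 < T) {ε : ℝ} (hε : 0 < ε) :
    ∀ᶠ N : ℝ in atTop, ∀ φ : ℝ → ℝ, Measurable φ → (∀ x, |φ x| ≤ 1) → φ.Periodic T →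
      ‖(∫ x, φ (N * x) • g x) - (T⁻¹ * ∫ t in 0..T, φ t) • ∫ x, g x‖ ≤ ε := by
  obtain ⟨δ, hδ, hgδ⟩ := Metric.eventually_nhds_iff.1
    ((tendsto_integral_norm_add_left_sub hg).eventually_le_const hε)
  filter_upwards [eventually_gt_atTop (T / δ), eventually_gt_atTop 0] with N hNδ hN φ hφ hφ1 hφT
  have hshift : ∀ t ∈ Set.uIoc 0 T,
      ‖(∫ x, φ (N * x) • g x) - ∫ x, φ (t + N * x) • g x‖ ≤ ε := fun t ht => by
    rw [Set.uIoc_of_le hT.le] at ht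
    refine (norm_integral_comp_mul_smul_sub_le hφ hφ1 hg hN.ne' t).trans (hgδ ?_)
    rw [Real.dist_0_eq_abs, abs_of_pos (div_pos ht.1 hN), div_lt_comm₀ hN hδ]
    exact (div_le_div_of_nonneg_right ht.2 hδ.le).trans_lt hNδ
  have hint : IntervalIntegrable (fun t => ∫ x, φ (t + N * x) • g x) volume 0 T :=
    intervalIntegrable_iff.2 (integrable_prod_comp_add_mul_smul hφ hφ1 hg N T).integral_prod_left
  have hmean : (∫ x, φ (N * x) • g x) - (T⁻¹ * ∫ t in 0..T, φ t) • ∫ x, g x =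
      T⁻¹ • ∫ t in 0..T, ((∫ x, φ (N * x) • g x) - ∫ x, φ (t + N * x) • g x) := by
    rw [intervalIntegral.integral_sub (by simp) hint, intervalIntegral.integral_const, sub_zero,
      integral_integral_comp_add_mul_smul hφ hφ1 hφT hg, smul_sub, inv_smul_smul₀ hT.ne', mul_smul]
  rw [hmean, norm_smul, Real.norm_of_nonneg (inv_nonneg.2 hT.le), inv_mul_le_iff₀ hT, mul_comm T]
  simpa [abs_of_pos hT] using intervalIntegral.norm_integral_le_of_norm_le_const hshift

end Fejer

section LogisticMap

theorem measurable_logisticMap : Measurable logisticMap := by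
  unfold logisticMap; fun_prop

theorem preimage_logisticMap_Icc : logisticMap ⁻¹' Set.Icc 0 1 = Set.Icc 0 1 := by
  ext x
  simp only [logisticMap, Set.mem_preimage, Set.mem_Icc]
  constructor <;> rintro ⟨h0, h1⟩ <;> constructor <;> nlinarith [sq_nonneg (2 * x - 1)]

theorem preimage_iterate_logisticMap_Icc (n : ℕ) :
    logisticMap^[n] ⁻¹' Set.Icc 0 1 = Set.Icc 0 1 := by
  rw [Set.preimage_iterate_eq, Function.iterate_fixed preimage_logisticMap_Icc]

theorem hasStrictDerivAt_logisticMap (x : ℝ) :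
    HasStrictDerivAt logisticMap (4 * (1 - 2 * x)) x := by
  have h := ((hasStrictDerivAt_id x).const_mul 4).mul ((hasStrictDerivAt_id x).const_sub 1)
  exact h.congr_deriv (by simp only [id]; ring)

theorem quasiMeasurePreserving_logisticMap :
    Measure.QuasiMeasurePreserving logisticMap volume volume := by
  refine quasiMeasurePreserving_of_ae_hasStrictFDerivAt_equiv measurable_logisticMap ?_
  filter_upwards [Measure.ae_ne volume (1 / 2 : ℝ)] with x hx
  have hderiv : 4 * (1 - 2 * x) ≠ 0 := fun h => hx (by linarith)
  exact ⟨_, (hasStrictDerivAt_logisticMap x).hasStrictFDerivAt_equiv hderiv⟩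

theorem map_iterate_logisticMap_absolutelyContinuous {μ : Measure ℝ} (hμ : μ ≪ volume) (n : ℕ) :
    μ.map logisticMap^[n] ≪ volume :=
  (hμ.map (measurable_logisticMap.iterate n)).trans
    (quasiMeasurePreserving_logisticMap.iterate n).absolutelyContinuous

theorem map_iterate_logisticMap_apply_Icc (μ : Measure ℝ) (n : ℕ) :
    μ.map logisticMap^[n] (Set.Icc 0 1) = μ (Set.Icc 0 1) := by
  rw [Measure.map_apply (measurable_logisticMap.iterate n) measurableSet_Icc,
    preimage_iterate_logisticMap_Icc]

end LogisticMap

/-- The parametrization `θ ↦ (1 - cos (π θ)) / 2 = sin² (π θ / 2)` of `[0, 1]` by an angle, extended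
to an even `2`-periodic function on `ℝ`. It semiconjugates doubling of the angle to the logistic map
and, restricted to `[0, 1]`, pushes Lebesgue measure forward to the invariant measure. -/
noncomputable def logisticParam (θ : ℝ) : ℝ := (1 - Real.cos (Real.pi * θ)) / 2

namespace logisticParam

open Real

theorem semiconj : Function.Semiconj logisticParam (2 * ·) logisticMap := fun θ => by
  simp only [logisticParam, logisticMap]
  rw [mul_left_comm, cos_two_mul]
  ring

theorem semiconj_iterate (n : ℕ) :
    Function.Semiconj logisticParam (2 ^ n * ·) logisticMap^[n] := by
  simpa only [mul_left_iterate] using semiconj.iterate_right n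

theorem periodic : Function.Periodic logisticParam 2 := fun θ => by
  simp only [logisticParam]
  rw [mul_add, mul_comm π 2, cos_add_two_pi]

theorem even : Function.Even logisticParam := fun θ => by
  simp only [logisticParam, mul_neg, cos_neg]

@[fun_prop]
theorem continuous : Continuous logisticParam := by
  unfold logisticParam; fun_prop

theorem hasDerivAt (θ : ℝ) : HasDerivAt logisticParam (π / 2 * sin (π * θ)) θ := by
  have h := (((hasDerivAt_id θ).const_mul π).cos.const_sub 1).div_const 2
  exact h.congr_deriv (by simp only [id]; ring)

theorem sin_pi_mul_pos {θ : ℝ} (hθ : θ ∈ Set.Ioo 0 1) : 0 < sin (π * θ) :=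
  sin_pos_of_pos_of_lt_pi (mul_pos pi_pos hθ.1) (mul_lt_of_lt_one_right pi_pos hθ.2)

theorem deriv_nonneg {θ : ℝ} (hθ : θ ∈ Set.Ioo 0 1) : 0 ≤ π / 2 * sin (π * θ) :=
  mul_nonneg (by positivity) (sin_pi_mul_pos hθ).le

theorem setIntegral_deriv_mul (f : ℝ → ℝ) :
    ∫ θ in Set.Icc 0 1, π / 2 * sin (π * θ) * f (logisticParam θ) = ∫ x in Set.Icc 0 1, f x := by
  have h := integral_Icc_deriv_smul_of_deriv_nonneg (g := f) continuous.continuousOn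
    (fun θ _ => hasDerivAt θ) (fun θ => deriv_nonneg) zero_le_one
  simpa [logisticParam] using h

theorem integrableOn_deriv_mul_iff (f : ℝ → ℝ) :
    IntegrableOn (fun θ => π / 2 * sin (π * θ) * f (logisticParam θ)) (Set.Icc 0 1) ↔
      IntegrableOn f (Set.Icc 0 1) := by
  have h := integrableOn_Icc_deriv_smul_iff_of_deriv_nonneg (g := f) continuous.continuousOn
    (fun θ _ => hasDerivAt θ) (fun θ => deriv_nonneg) zero_le_one
  simpa [logisticParam] using h

theorem deriv_mul_logisticDensity {θ : ℝ} (hθ : θ ∈ Set.Ioo 0 1) :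
    π / 2 * sin (π * θ) * logisticDensity (logisticParam θ) = 1 := by
  have hsin := sin_pi_mul_pos hθ
  have hsq : logisticParam θ * (1 - logisticParam θ) = (sin (π * θ) / 2) ^ 2 := by
    rw [div_pow, sin_sq, logisticParam]; ring
  have hmem : 0 < logisticParam θ ∧ logisticParam θ < 1 := by
    have : 0 < logisticParam θ * (1 - logisticParam θ) := hsq ▸ by positivity
    constructor <;> nlinarith
  rw [logisticDensity, if_pos hmem, hsq, sqrt_sq (by positivity)]
  field_simp

theorem ae_deriv_mul_logisticDensity : ∀ᵐ θ ∂volume.restrict (Set.Icc 0 1),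
    π / 2 * sin (π * θ) * logisticDensity (logisticParam θ) = 1 := by
  rw [← Measure.restrict_congr_set Ioo_ae_eq_Icc]
  exact ae_restrict_of_forall_mem measurableSet_Ioo fun θ => deriv_mul_logisticDensity

end logisticParam

section Mixing

open logisticParam

theorem integrableOn_logisticDensity : IntegrableOn logisticDensity (Set.Icc 0 1) :=
  (integrableOn_deriv_mul_iff _).1 <| Integrable.congr (integrable_const 1) <| by
    filter_upwards [ae_deriv_mul_logisticDensity] with θ hθ using hθ.symm

theorem setIntegral_mul_logisticDensity (s : ℝ → ℝ) :
    ∫ x in Set.Icc 0 1, s x * logisticDensity x = ∫ θ in 0..1, s (logisticParam θ) := by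
  rw [← setIntegral_deriv_mul, intervalIntegral.integral_of_le zero_le_one,
    ← integral_Icc_eq_integral_Ioc]
  refine integral_congr_ae ?_
  filter_upwards [ae_deriv_mul_logisticDensity] with θ hθ
  rw [mul_left_comm, hθ, mul_one]

theorem intervalIntegrable_comp_logisticParam {s : ℝ → ℝ} (hs : Measurable s) (hs1 : ∀ x, |s x| ≤ 1)
    (a b : ℝ) : IntervalIntegrable (fun θ => s (logisticParam θ)) volume a b :=
  intervalIntegrable_iff.2 <| Measure.integrableOn_of_bounded (by simp [Set.uIoc])
    (Measurable.aestronglyMeasurable (by fun_prop)) (.of_forall fun _ => hs1 _)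

theorem eventually_abs_setIntegral_comp_iterate_sub_le {p : ℝ → ℝ}
    (hp : IntegrableOn p (Set.Icc 0 1)) {ε : ℝ} (hε : 0 < ε) :
    ∀ᶠ n : ℕ in atTop, ∀ s : ℝ → ℝ, Measurable s → (∀ x, |s x| ≤ 1) →
      |(∫ x in Set.Icc 0 1, s (logisticMap^[n] x) * p x) -
        (∫ x in Set.Icc 0 1, s x * logisticDensity x) * ∫ x in Set.Icc 0 1, p x| ≤ ε := by
  set g := (Set.Icc 0 1).indicator
    fun θ => Real.pi / 2 * Real.sin (Real.pi * θ) * p (logisticParam θ)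
  have hg : Integrable g :=
    (integrable_indicator_iff measurableSet_Icc).2 ((integrableOn_deriv_mul_iff p).2 hp)
  filter_upwards [(tendsto_pow_atTop_atTop_of_one_lt one_lt_two).eventually
    (eventually_norm_integral_comp_mul_smul_sub_le hg two_pos hε)] with n hn s hs hs1
  have hlift : ∫ x in Set.Icc 0 1, s (logisticMap^[n] x) * p x =
      ∫ θ, s (logisticParam (2 ^ n * θ)) • g θ := by
    simp only [g, smul_eq_mul, ← Set.indicator_mul_right _ fun θ => s (logisticParam (2 ^ n * θ))]
    rw [integral_indicator measurableSet_Icc, ← setIntegral_deriv_mul]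
    simp only [(semiconj_iterate n).eq, mul_left_comm]
  have hmass : ∫ x in Set.Icc 0 1, p x = ∫ θ, g θ := by
    rw [integral_indicator measurableSet_Icc, setIntegral_deriv_mul]
  have hmean : ∫ x in Set.Icc 0 1, s x * logisticDensity x =
      2⁻¹ * ∫ θ in 0..2, s (logisticParam θ) := by
    have h := intervalIntegral_two_mul_of_periodic_of_even (φ := s ∘ logisticParam) (a := 1)
      (by simpa using periodic.comp s) (fun θ => congrArg s (even θ))
      (intervalIntegrable_comp_logisticParam hs hs1)
    rw [mul_one] at h
    rw [setIntegral_mul_logisticDensity, eq_inv_mul_iff_mul_eq₀ two_ne_zero]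
    exact h.symm
  rw [hlift, hmass, hmean]
  exact hn (s ∘ logisticParam) (by fun_prop) (fun _ => hs1 _) (periodic.comp s)

theorem setIntegral_mul_rnDeriv_map_iterate_logisticMap {μ : Measure ℝ} [SFinite μ]
    (hμ : μ ≪ volume) (hμ1 : μ (Set.Icc 0 1) ≠ ∞) {s : ℝ → ℝ} (hs : Measurable s) (n : ℕ) :
    ∫ x in Set.Icc 0 1, s x * ((μ.map logisticMap^[n]).rnDeriv volume x).toReal =
      ∫ x in Set.Icc 0 1, s (logisticMap^[n] x) * (μ.rnDeriv volume x).toReal := by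
  have hF := measurable_logisticMap.iterate n
  simp only [mul_comm (s _), ← smul_eq_mul]
  rw [setIntegral_toReal_rnDeriv_smul (map_iterate_logisticMap_absolutelyContinuous hμ n)
      measurableSet_Icc (map_iterate_logisticMap_apply_Icc μ n ▸ hμ1),
    setIntegral_toReal_rnDeriv_smul hμ measurableSet_Icc hμ1,
    setIntegral_map measurableSet_Icc hs.aestronglyMeasurable hF.aemeasurable,
    preimage_iterate_logisticMap_Icc]

end Mixing

theorem logistic_L1_convergence_general (μ : Measure ℝ) [SFinite μ] (hμ : μ ≪ volume)
    (hμ1 : μ (Set.Icc 0 1) ≠ ∞) :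
    Tendsto
      (fun n : ℕ => ∫ x in Set.Icc (0 : ℝ) 1,
        |((μ.map logisticMap^[n]).rnDeriv volume x).toReal -
          μ.real (Set.Icc 0 1) * logisticDensity x|)
      atTop (𝓝 0) := by
  have hmass : ∫ x in Set.Icc 0 1, (μ.rnDeriv volume x).toReal = μ.real (Set.Icc 0 1) := by
    simpa using setIntegral_toReal_rnDeriv_smul hμ measurableSet_Icc hμ1 fun _ => (1 : ℝ)
  have hq := integrableOn_logisticDensity.const_mul (μ.real (Set.Icc 0 1))
  refine Metric.nhds_basis_closedBall.tendsto_right_iff.2 fun ε hε => ?_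
  filter_upwards [eventually_abs_setIntegral_comp_iterate_sub_le
    (integrableOn_toReal_rnDeriv (ν := volume) hμ1) hε] with n hn
  have hpn := integrableOn_toReal_rnDeriv (ν := volume)
    ((map_iterate_logisticMap_apply_Icc μ n).trans_ne hμ1)
  rw [mem_closedBall_zero_iff, Real.norm_of_nonneg (integral_nonneg fun _ => abs_nonneg _)]
  refine integral_abs_le_of_forall_integral_mul_le (hpn.sub hq) fun s hs hs1 => ?_
  have hmul {f : ℝ → ℝ} (hf : IntegrableOn f (Set.Icc 0 1) volume) :
      IntegrableOn (fun x => s x * f x) (Set.Icc 0 1) :=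
    hf.bdd_mul hs.aestronglyMeasurable (.of_forall hs1)
  calc ∫ x in Set.Icc 0 1, s x * (((μ.map logisticMap^[n]).rnDeriv volume x).toReal -
          μ.real (Set.Icc 0 1) * logisticDensity x)
      = (∫ x in Set.Icc 0 1, s (logisticMap^[n] x) * (μ.rnDeriv volume x).toReal) -
          (∫ x in Set.Icc 0 1, s x * logisticDensity x) *
            ∫ x in Set.Icc 0 1, (μ.rnDeriv volume x).toReal := by
        simp only [mul_sub]
        rw [integral_sub (hmul hpn) (hmul hq),
          setIntegral_mul_rnDeriv_map_iterate_logisticMap hμ hμ1 hs, hmass]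
        simp only [mul_left_comm (s _), integral_const_mul]
        rw [mul_comm]
    _ ≤ ε := (le_abs_self _).trans (hn s hs hs1)

/-- For an initial probability density `p₀ ∈ L¹[0,1]`, the densities
`pₙ` of the pushforward measures `(Fⁿ)_* μ₀` converge to the invariant density `q`
in `L¹[0,1]`. -/
theorem logistic_L1_convergence
    (p₀ : ℝ → ℝ) (hmeas : Measurable p₀) (hpos : ∀ x, 0 ≤ p₀ x)
    (hsupp : ∀ x, x ∉ Set.Icc (0 : ℝ) 1 → p₀ x = 0)
    (hint : IntegrableOn p₀ (Set.Icc (0 : ℝ) 1))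
    (hnorm : ∫ x in Set.Icc (0 : ℝ) 1, p₀ x = 1) :
    Tendsto
      (fun n : ℕ => ∫ x in Set.Icc (0 : ℝ) 1,
        |((((volume.withDensity (fun y => ENNReal.ofReal (p₀ y))).map
            (logisticMap^[n])).rnDeriv volume) x).toReal - logisticDensity x|)
      atTop (𝓝 0) := by
  have hmass := withDensity_ofReal_apply_eq_ofReal_setIntegral measurableSet_Icc
    (.of_forall hpos) hint
  simpa [Measure.real, hmass, hnorm] using logistic_L1_convergence_general _
    (withDensity_absolutelyContinuous _ _) (hmass.trans_ne ENNReal.ofReal_ne_top)
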